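/- (Almost sure convergence of linear TD with Markovian samples.) Let {S_t} be a time-homogeneous Markov chain on a nonempty finite state space S with irreducible and aperiodic transition matrix P_π, with the trajectory probability measure on (S × S)^ℕ constructed via the Ionescu–Tulcea theorem from the augmented chain Y_t = (S_t, S_{t+1}). Let X be a feature matrix with full column rank, r_π : S → ℝ a reward vector, γ ∈ [0,1), and step sizes α_t = 1/(t+2)^ν with ν ∈ (2/3, 1). Let the linear TD iterates be w_0 given and w_{t+1} = w_t + α_t·(r_π(S_t) + γ·⟨x(S_{t+1}), w_t⟩ − ⟨x(S_t), w_t⟩)·x(S_t). Then, almost surely with respect to the trajectory measure, w_t → w* := −A⁻¹b, where A = Xᵀ D_π (γP_π − I) X and b = Xᵀ D_π r_π, with D_π = diag(d_π) and d_π the stationary distribution of P_π. -/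

import Mathlib

/-!
The error `z = w - w*` obeys the linear recursion `z' = z + α (A(Y) z + c(Y))`, where `Y` is the
current transition, the stationary mean of `A(Y)` is the negative definite matrix `A`, and the
stationary mean of `c(Y)` is zero. The proof separates probability from dynamics.

*Probability.* For every real function `F` of a transition with stationary mean `m`, the series
`∑ α_t (F(Y_t) - m)` converges almost surely (`ae_exists_tendsto_centred_sum`). Irreducibility
makes the Poisson equation solvable (`exists_poisson`), so `F(i, j) - m` equals
`H(i, j) + g(i) - g(j)` with `∑ j, P i j * H i j = 0`. The `H` part of the series is a martingale,
bounded in `L²` because `∑ α_t² < ∞`, and converges by Doob's theorem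
(`ae_exists_tendsto_martingale`); the `g` part converges by Abel summation
(`exists_tendsto_abel`).

*Dynamics.* On a path where the series with terms `α_t (A(Y_t) - A)` and `α_t c(Y_t)` converge, let
`M_t` and `N_t` be their tails, which tend to zero. The corrected error
`u_t = z_t + M_t z_t + N_t` satisfies `u' = u + α (A u + η)` with `‖η‖ ≤ δ (‖u‖ + 1)` and `δ → 0`:
the noise has been absorbed into the tails. Since `A` is negative definite, `1 + α A` contracts the
Euclidean norm by `1 - c α / 2` for small `α`, and `∑ α_t = ∞` forces `u_t → 0`, hence `z_t → 0`
(`tendsto_zero_of_linear_recursion`).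

Negative definiteness (`td_matrix_neg_def`) is the classical estimate
`⟨v, D P v⟩ ≤ ⟨v, D v⟩` for a stationary weight `D`, applied to `v = X u`, together with `γ < 1`,
positivity of the stationary distribution and injectivity of `X`.
-/

open Finset Matrix MeasureTheory Filter

/-- The set of return times of state `i` under the stochastic matrix `P`. -/
def returnTimes {S : Type*} [Fintype S] [DecidableEq S] (P : Matrix S S ℝ) (i : S) : Set ℕ :=
  {n | 1 ≤ n ∧ 0 < (P ^ n) i i}

/-! ### Stability of perturbed linear recursions -/

/-- A nonnegative sequence contracted by `1 - c α` with a perturbation `α δ`, `δ → 0`, vanishes in the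
limit when `∑ α = ∞`. -/
theorem tendsto_zero_of_contracting_recursion {a α δ : ℕ → ℝ} {c : ℝ} (hc : 0 < c)
    (ha : ∀ t, 0 ≤ a t)
    (hsum : Tendsto (fun n => ∑ t ∈ range n, α t) atTop atTop)
    (hδ : Tendsto δ atTop (nhds 0)) (hα0 : ∀ t, 0 ≤ α t) (hα1 : ∀ᶠ t in atTop, c * α t ≤ 1)
    (hrec : ∀ᶠ t in atTop, a (t + 1) ≤ (1 - c * α t) * a t + α t * δ t) :
    Tendsto a atTop (nhds 0) := by
  rw [Metric.tendsto_atTop']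
  intro ε hε
  have hδ' : ∀ᶠ t in atTop, δ t < c * (ε / 2) := hδ.eventually (gt_mem_nhds (by positivity))
  obtain ⟨N, hN⟩ := eventually_atTop.1 (hδ'.and (hα1.and hrec))
  set σ : ℕ → ℝ := fun n => ∑ t ∈ range n, α t with hσ
  -- the excess of `a` over `ε / 2` is contracted by the factor `1 - c α ≤ exp (-c α)`
  have key : ∀ n, N ≤ n →
      a n - ε / 2 ≤ |a N - ε / 2| * Real.exp (-c * (σ n - σ N)) := by
    intro n hn
    induction n, hn using Nat.le_induction with
    | base => simpa using le_abs_self (a N - ε / 2)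
    | succ n hn ih =>
      obtain ⟨h1, h2, h3⟩ := hN n hn
      have hs : σ (n + 1) = σ n + α n := by simp [hσ, Finset.sum_range_succ]
      have he : Real.exp (-c * (σ (n + 1) - σ N))
          = Real.exp (-(c * α n)) * Real.exp (-c * (σ n - σ N)) := by
        rw [← Real.exp_add, hs]; ring_nf
      have h4 : 1 - c * α n ≤ Real.exp (-(c * α n)) := Real.one_sub_le_exp_neg _
      have h5 : 0 ≤ |a N - ε / 2| * Real.exp (-c * (σ n - σ N)) := by positivity
      calc a (n + 1) - ε / 2 ≤ (1 - c * α n) * (a n - ε / 2) := by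
            nlinarith [mul_le_mul_of_nonneg_left h1.le (hα0 n)]
        _ ≤ (1 - c * α n) * (|a N - ε / 2| * Real.exp (-c * (σ n - σ N))) :=
            mul_le_mul_of_nonneg_left ih (by linarith)
        _ ≤ Real.exp (-(c * α n)) * (|a N - ε / 2| * Real.exp (-c * (σ n - σ N))) :=
            mul_le_mul_of_nonneg_right h4 h5
        _ = _ := by rw [he]; ring
  have hlim : Tendsto (fun n => |a N - ε / 2| * Real.exp (-c * (σ n - σ N))) atTop (nhds 0) := by
    have h1 : Tendsto (fun n => -c * (σ n - σ N)) atTop atBot :=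
      (tendsto_atTop_add_const_right _ (-σ N) hsum).const_mul_atTop_of_neg (by linarith)
    simpa using (Real.tendsto_exp_atBot.comp h1).const_mul |a N - ε / 2|
  obtain ⟨N', hN'⟩ := eventually_atTop.1 (hlim.eventually (gt_mem_nhds (half_pos hε)))
  refine ⟨max N N', fun n hn => ?_⟩
  have h1 := key n (le_of_lt (lt_of_le_of_lt (le_max_left _ _) hn))
  have h2 := hN' n (le_of_lt (lt_of_le_of_lt (le_max_right _ _) hn))
  rw [Real.dist_eq, sub_zero, abs_of_nonneg (ha n)]
  linarith

/-- Deterministic stability of a perturbed linear recursion. Only convergence of the weighted noise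
series is required, not absolute convergence; the tails of these series define the change of
variables `u = z + M z + N` that removes the noise to first order. -/
theorem tendsto_zero_of_linear_recursion
    {E : Type*} [NormedAddCommGroup E] [InnerProductSpace ℝ E]
    (A : E →L[ℝ] E) {c : ℝ} (hc : 0 < c) (hA : ∀ u, inner ℝ u (A u) ≤ -c * ‖u‖ ^ 2)
    {α : ℕ → ℝ} (hα0 : ∀ t, 0 ≤ α t) (hαlim : Tendsto α atTop (nhds 0))
    (hαsum : Tendsto (fun n => ∑ t ∈ range n, α t) atTop atTop)
    (At : ℕ → E →L[ℝ] E) (ct : ℕ → E) {B : ℝ} (hB : ∀ t, ‖At t‖ ≤ B) (hB' : ∀ t, ‖ct t‖ ≤ B)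
    (M : E →L[ℝ] E)
    (hM : Tendsto (fun n => ∑ t ∈ range n, α t • (At t - A)) atTop (nhds M))
    (N : E) (hN : Tendsto (fun n => ∑ t ∈ range n, α t • ct t) atTop (nhds N))
    (z : ℕ → E) (hz : ∀ t, z (t + 1) = z t + α t • (At t (z t) + ct t)) :
    Tendsto z atTop (nhds 0) := by
  set Mt : ℕ → E →L[ℝ] E := fun n => M - ∑ t ∈ range n, α t • (At t - A) with hMt
  set Nt : ℕ → E := fun n => N - ∑ t ∈ range n, α t • ct t with hNt
  have hMs : ∀ n, Mt (n + 1) = Mt n - α n • (At n - A) := fun n => by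
    simp only [hMt, Finset.sum_range_succ]; abel
  have hNs : ∀ n, Nt (n + 1) = Nt n - α n • ct n := fun n => by
    simp only [hNt, Finset.sum_range_succ]; abel
  have hM0 : Tendsto (fun n => ‖Mt n‖) atTop (nhds 0) := by
    simpa using (hM.const_sub M).norm
  have hN0 : Tendsto (fun n => ‖Nt n‖) atTop (nhds 0) := by
    simpa using (hN.const_sub N).norm
  have hB0 : 0 ≤ B := (norm_nonneg _).trans (hB 0)
  set u : ℕ → E := fun t => z t + Mt t (z t) + Nt t with hu
  set η : ℕ → E := fun t => Mt (t + 1) (At t (z t) + ct t) - A (Mt t (z t) + Nt t) with hη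
  -- the `At`, `ct` terms of the recursion cancel against the increments of the tails `Mt`, `Nt`
  have hus : ∀ t, u (t + 1) = (u t + α t • A (u t)) + α t • η t := by
    intro t
    have e1 : Mt (t + 1) (z (t + 1)) =
        Mt (t + 1) (z t) + α t • Mt (t + 1) (At t (z t) + ct t) := by
      rw [hz t, map_add, map_smul]
    have e2 : Mt (t + 1) (z t) = Mt t (z t) - α t • (At t (z t) - A (z t)) := by
      rw [hMs]; simp
    have e3 : A (u t) = A (z t) + A (Mt t (z t) + Nt t) := by
      simp only [hu, map_add]; abel
    simp only [hη]
    rw [e3]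
    change z (t + 1) + Mt (t + 1) (z (t + 1)) + Nt (t + 1) = _
    rw [e1, e2, hNs, hz t]
    simp only [hu, smul_add, smul_sub]
    abel
  set δ : ℕ → ℝ := fun t => 3 * B * ‖Mt (t + 1)‖ + 2 * ‖A‖ * ‖Mt t‖ + ‖A‖ * ‖Nt t‖ with hδ
  have hδ0 : Tendsto δ atTop (nhds 0) := by
    have := (((hM0.comp (tendsto_add_atTop_nat 1)).const_mul (3 * B)).add
      (hM0.const_mul (2 * ‖A‖))).add (hN0.const_mul ‖A‖)
    simpa using this
  have hM12 : ∀ᶠ t in atTop, ‖Mt t‖ < 1 / 2 := hM0.eventually (gt_mem_nhds (by norm_num))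
  have hN1 : ∀ᶠ t in atTop, ‖Nt t‖ < 1 := hN0.eventually (gt_mem_nhds (by norm_num))
  -- `1 + Mt t` is invertible once `‖Mt t‖ < 1 / 2`, so `z` is controlled by `u`
  have hzu : ∀ᶠ t in atTop, ‖z t‖ ≤ 2 * (‖u t‖ + ‖Nt t‖) := by
    filter_upwards [hM12] with t h1
    have e : z t = u t - Mt t (z t) - Nt t := by simp only [hu]; abel
    have h2 : ‖z t‖ ≤ ‖u t‖ + ‖Mt t (z t)‖ + ‖Nt t‖ := by
      calc ‖z t‖ = ‖u t - Mt t (z t) - Nt t‖ := by rw [← e]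
        _ ≤ _ := (norm_sub_le _ _).trans (add_le_add_left (norm_sub_le _ _) _)
    have h3 := (Mt t).le_opNorm (z t)
    nlinarith [mul_le_mul_of_nonneg_right h1.le (norm_nonneg (z t))]
  have hηb : ∀ᶠ t in atTop, ‖η t‖ ≤ δ t * (‖u t‖ + 1) := by
    filter_upwards [hzu, hN1] with t h1 h2
    have h3 : ‖Mt (t + 1) (At t (z t) + ct t)‖ ≤ ‖Mt (t + 1)‖ * (B * ‖z t‖ + B) := by
      refine ((Mt (t + 1)).le_opNorm _).trans (mul_le_mul_of_nonneg_left ?_ (norm_nonneg _))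
      refine (norm_add_le _ _).trans (add_le_add ?_ (hB' t))
      exact ((At t).le_opNorm _).trans (mul_le_mul_of_nonneg_right (hB t) (norm_nonneg _))
    have h4 : ‖A (Mt t (z t) + Nt t)‖ ≤ ‖A‖ * (‖Mt t‖ * ‖z t‖ + ‖Nt t‖) := by
      refine (A.le_opNorm _).trans (mul_le_mul_of_nonneg_left ?_ (norm_nonneg _))
      exact (norm_add_le _ _).trans (add_le_add_left ((Mt t).le_opNorm _) _)
    have h5 : ‖z t‖ ≤ 2 * ‖u t‖ + 2 := by linarith
    have h6 : ‖Mt (t + 1)‖ * (B * ‖z t‖ + B) ≤ ‖Mt (t + 1)‖ * (B * (3 * (‖u t‖ + 1))) := by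
      refine mul_le_mul_of_nonneg_left ?_ (norm_nonneg _)
      nlinarith [norm_nonneg (u t)]
    have h7 : ‖A‖ * (‖Mt t‖ * ‖z t‖ + ‖Nt t‖) ≤
        ‖A‖ * (‖Mt t‖ * (2 * ‖u t‖ + 2) + ‖Nt t‖ * (‖u t‖ + 1)) := by
      refine mul_le_mul_of_nonneg_left (add_le_add
        (mul_le_mul_of_nonneg_left h5 (norm_nonneg _)) ?_) (norm_nonneg _)
      nlinarith [norm_nonneg (u t), norm_nonneg (Nt t), mul_nonneg (norm_nonneg (Nt t)) (norm_nonneg (u t))]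
    calc ‖η t‖ ≤ _ := norm_sub_le _ _
      _ ≤ _ := add_le_add (h3.trans h6) (h4.trans h7)
      _ = δ t * (‖u t‖ + 1) := by simp only [hδ]; ring
  have hcα : ∀ᶠ t in atTop, c * α t < 1 :=
    (hαlim.const_mul c).eventually (gt_mem_nhds (by simp))
  have hAα : ∀ᶠ t in atTop, ‖A‖ ^ 2 * α t < c :=
    (hαlim.const_mul (‖A‖ ^ 2)).eventually (gt_mem_nhds (by simpa))
  -- negative definiteness makes `1 + α A` a contraction for small `α`
  have hcontr : ∀ᶠ t in atTop, ‖u t + α t • A (u t)‖ ≤ (1 - c / 2 * α t) * ‖u t‖ := by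
    filter_upwards [hcα, hAα] with t h1 h2
    refine abs_le_of_sq_le_sq' ?_ (mul_nonneg (by nlinarith [hα0 t]) (norm_nonneg _)) |>.2
    have h3 : ‖u t + α t • A (u t)‖ ^ 2
        = ‖u t‖ ^ 2 + 2 * α t * inner ℝ (u t) (A (u t)) + α t ^ 2 * ‖A (u t)‖ ^ 2 := by
      rw [norm_add_sq_real, real_inner_smul_right, norm_smul, mul_pow, Real.norm_eq_abs, sq_abs]
      ring
    have h4 : ‖A (u t)‖ ^ 2 ≤ ‖A‖ ^ 2 * ‖u t‖ ^ 2 := by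
      rw [← mul_pow]; exact pow_le_pow_left₀ (norm_nonneg _) (A.le_opNorm _) 2
    have h5 := mul_le_mul_of_nonneg_left (hA (u t)) (hα0 t)
    have h6 := mul_le_mul_of_nonneg_left h4 (sq_nonneg (α t))
    have h7 := mul_le_mul_of_nonneg_left h2.le (mul_nonneg (hα0 t) (sq_nonneg ‖u t‖))
    rw [h3]
    nlinarith [mul_nonneg (sq_nonneg (c * α t)) (sq_nonneg ‖u t‖)]
  have hδc : ∀ᶠ t in atTop, δ t < c / 4 := hδ0.eventually (gt_mem_nhds (by positivity))
  have hu0 : Tendsto (fun t => ‖u t‖) atTop (nhds 0) := by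
    refine tendsto_zero_of_contracting_recursion (c := c / 4) (by positivity)
      (fun t => norm_nonneg _) hαsum hδ0 hα0 ?_ ?_
    · filter_upwards [hcα] with t h1
      nlinarith [hα0 t]
    · filter_upwards [hcontr, hδc, hηb] with t h1 h2 h3
      rw [hus t]
      have h4 : ‖α t • η t‖ ≤ α t * (δ t * (‖u t‖ + 1)) := by
        rw [norm_smul, Real.norm_of_nonneg (hα0 t)]
        exact mul_le_mul_of_nonneg_left h3 (hα0 t)
      have h5 := norm_add_le (u t + α t • A (u t)) (α t • η t)
      have h6 := mul_le_mul_of_nonneg_left h2.le (mul_nonneg (hα0 t) (norm_nonneg (u t)))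
      nlinarith
  refine tendsto_zero_iff_norm_tendsto_zero.2 ?_
  refine squeeze_zero' (Eventually.of_forall fun _ => norm_nonneg _) hzu ?_
  simpa using (hu0.add hN0).const_mul 2

/-! ### Martingales along the chain -/

/-- Extend a finite word `z : Iic n → S` to a path by an arbitrary constant tail. -/
noncomputable def extendPath {S : Type*} [Nonempty S] {n : ℕ} (z : (i : Finset.Iic n) → S) : ℕ → S :=
  fun i => if h : i ≤ n then z ⟨i, Finset.mem_Iic.2 h⟩ else Classical.arbitrary S

theorem extendPath_eq {S : Type*} [Nonempty S] {n : ℕ} (ω : ℕ → S) {i : ℕ} (hi : i ≤ n) :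
    extendPath (Preorder.frestrictLe (π := fun _ => S) n ω) i = ω i := by
  simp [extendPath, hi]

theorem DependsOn.measurable_piLE
    {S : Type*} [Fintype S] [Nonempty S] [MeasurableSpace S] [MeasurableSingletonClass S]
    {n : ℕ} {φ : (ℕ → S) → ℝ} (hφ : DependsOn φ (Set.Iic n)) :
    Measurable[Filtration.piLE (X := fun _ : ℕ => S) n] φ := by
  have h : φ = (fun z => φ (extendPath z)) ∘ Preorder.frestrictLe (π := fun _ => S) n := by
    funext ω
    exact hφ fun i hi => (extendPath_eq ω hi).symm
  rw [h, Filtration.piLE_eq_comap_frestrictLe]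
  exact (measurable_of_finite _).comp (comap_measurable _)

/-- A function of finitely many coordinates takes finitely many values, hence is integrable. -/
theorem DependsOn.integrable_path
    {S : Type*} [Fintype S] [Nonempty S] [MeasurableSpace S] [MeasurableSingletonClass S]
    {n : ℕ} {φ : (ℕ → S) → ℝ} (hφ : DependsOn φ (Set.Iic n))
    (μ : Measure (ℕ → S)) [IsFiniteMeasure μ] : Integrable φ μ := by
  refine Integrable.of_bound
    ((hφ.measurable_piLE.mono (Filtration.piLE.le n) le_rfl).aestronglyMeasurable)
    (∑ z : (i : Finset.Iic n) → S, ‖φ (extendPath z)‖) (ae_of_all _ fun ω => ?_)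
  have h : φ ω = φ (extendPath (Preorder.frestrictLe (π := fun _ => S) n ω)) :=
    hφ fun i hi => (extendPath_eq ω hi).symm
  rw [h]
  exact Finset.single_le_sum (f := fun z : (i : Finset.Iic n) → S => ‖φ (extendPath z)‖)
    (fun _ _ => norm_nonneg _) (Finset.mem_univ _)

/-- The Markov property in weak form: if `H` has mean zero under every row of `P`, then
`H (ω n) (ω (n + 1))` is orthogonal to every function of the first `n + 1` coordinates. The integral
is a finite sum over cylinders, whose measures are given by `hμ`. -/
theorem integral_mul_centred_eq_zero
    {S : Type*} [Fintype S] [Nonempty S] [MeasurableSpace S] [MeasurableSingletonClass S]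
    {P : Matrix S S ℝ} (hnonneg : ∀ i j, 0 ≤ P i j)
    {ι : S → ℝ} (hιnonneg : ∀ s, 0 ≤ ι s)
    (μ : Measure (ℕ → S)) [IsProbabilityMeasure μ]
    (hμ : ∀ (n : ℕ) (ys : ℕ → S),
      μ {ω | ∀ i ≤ n, ω i = ys i} =
        ENNReal.ofReal (ι (ys 0) * ∏ i ∈ Finset.range n, P (ys i) (ys (i + 1))))
    {H : S → S → ℝ} (hH : ∀ i, ∑ j, P i j * H i j = 0)
    {n : ℕ} {φ : (ℕ → S) → ℝ} (hφ : DependsOn φ (Set.Iic n)) :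
    ∫ ω, φ ω * H (ω n) (ω (n + 1)) ∂μ = 0 := by
  classical
  let y : ((i : Finset.Iic n) → S) → S → ℕ → S := fun z j =>
    Function.update (extendPath z) (n + 1) j
  let C : ((i : Finset.Iic n) → S) → S → Set (ℕ → S) := fun z j =>
    {ω | ∀ i ≤ n + 1, ω i = y z j i}
  have hC : ∀ z j, MeasurableSet (C z j) := by
    intro z j
    have : C z j = ⋂ i, ⋂ (_ : i ≤ n + 1), (fun ω : ℕ → S => ω i) ⁻¹' {y z j i} := by
      ext ω; simp [C]
    rw [this]
    exact MeasurableSet.iInter fun i => MeasurableSet.iInter fun _ =>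
      measurable_pi_apply i (measurableSet_singleton _)
  have hy : ∀ z j, ∀ i ≤ n, y z j i = extendPath z i := fun z j i hi => by
    simp only [y]; rw [Function.update_of_ne (by omega)]
  have hy' : ∀ z j, y z j (n + 1) = j := fun z j => by simp [y]
  have hmem : ∀ ω z j, ω ∈ C z j ↔
      z = Preorder.frestrictLe (π := fun _ => S) n ω ∧ j = ω (n + 1) := by
    intro ω z j
    constructor
    · intro h
      refine ⟨?_, by rw [h (n + 1) le_rfl, hy']⟩
      funext i
      have hi : i.1 ≤ n := Finset.mem_Iic.1 i.2
      have := h i (by omega)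
      rw [hy z j i hi] at this
      simp [extendPath, hi] at this
      simp [this]
    · rintro ⟨rfl, rfl⟩ i hi
      rcases Nat.lt_or_ge n i with h | h
      · obtain rfl : i = n + 1 := by omega
        rw [hy']
      · rw [hy _ _ i h, extendPath_eq ω h]
  -- `C z j` is the cylinder of the paths that start with the word `z` and continue with `j`
  have hpt : ∀ ω, φ ω * H (ω n) (ω (n + 1)) = ∑ z, ∑ j,
      (C z j).indicator (fun _ => φ (extendPath z) * H (extendPath z n) j) ω := by
    intro ω
    rw [Finset.sum_eq_single (Preorder.frestrictLe (π := fun _ => S) n ω),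
      Finset.sum_eq_single (ω (n + 1))]
    · rw [Set.indicator_of_mem ((hmem _ _ _).2 ⟨rfl, rfl⟩), extendPath_eq ω le_rfl]
      congr 1
      exact hφ fun i hi => (extendPath_eq ω hi).symm
    · intro j _ hj
      exact Set.indicator_of_notMem (fun h => hj ((hmem _ _ _).1 h).2) _
    · simp
    · intro z _ hz
      exact Finset.sum_eq_zero fun j _ =>
        Set.indicator_of_notMem (fun h => hz ((hmem _ _ _).1 h).1) _
    · simp
  have hint : ∀ z j, Integrable
      ((C z j).indicator (fun _ => φ (extendPath z) * H (extendPath z n) j)) μ :=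
    fun z j => (integrable_const _).indicator (hC z j)
  have hm : ∀ z j, μ.real (C z j) = (ι (extendPath z 0) *
      ∏ i ∈ Finset.range n, P (extendPath z i) (extendPath z (i + 1))) * P (extendPath z n) j := by
    intro z j
    rw [measureReal_def, hμ (n + 1) (y z j), ENNReal.toReal_ofReal
      (mul_nonneg (hιnonneg _) (Finset.prod_nonneg fun _ _ => hnonneg _ _)),
      Finset.prod_range_succ, hy', hy z j n le_rfl, hy z j 0 (Nat.zero_le _), mul_assoc]
    congr 2
    refine Finset.prod_congr rfl fun i hi => ?_
    have := Finset.mem_range.1 hi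
    rw [hy z j i (by omega), hy z j (i + 1) (by omega)]
  simp_rw [hpt]
  rw [integral_finsetSum _ fun z _ => integrable_finsetSum _ fun j _ => hint z j]
  refine Finset.sum_eq_zero fun z _ => ?_
  rw [integral_finsetSum _ fun j _ => hint z j]
  simp_rw [integral_indicator_const _ (hC z _), hm, smul_eq_mul]
  set m := ι (extendPath z 0) *
      ∏ i ∈ Finset.range n, P (extendPath z i) (extendPath z (i + 1))
  calc ∑ j, m * P (extendPath z n) j * (φ (extendPath z) * H (extendPath z n) j)
      = m * φ (extendPath z) * ∑ j, P (extendPath z n) j * H (extendPath z n) j := by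
        rw [Finset.mul_sum]; exact Finset.sum_congr rfl fun j _ => by ring
    _ = 0 := by rw [hH, mul_zero]

/-- Almost sure convergence of a square-summably weighted sum of martingale increments of the chain. -/
theorem ae_exists_tendsto_martingale
    {S : Type*} [Fintype S] [Nonempty S] [MeasurableSpace S] [MeasurableSingletonClass S]
    {P : Matrix S S ℝ} (hnonneg : ∀ i j, 0 ≤ P i j)
    {ι : S → ℝ} (hιnonneg : ∀ s, 0 ≤ ι s)
    (μ : Measure (ℕ → S)) [IsProbabilityMeasure μ]
    (hμ : ∀ (n : ℕ) (ys : ℕ → S),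
      μ {ω | ∀ i ≤ n, ω i = ys i} =
        ENNReal.ofReal (ι (ys 0) * ∏ i ∈ Finset.range n, P (ys i) (ys (i + 1))))
    {H : S → S → ℝ} (hH : ∀ i, ∑ j, P i j * H i j = 0)
    {α : ℕ → ℝ} (hα2 : Summable fun t => α t ^ 2) :
    ∀ᵐ ω ∂μ, ∃ L, Tendsto (fun n => ∑ t ∈ range n, α t * H (ω t) (ω (t + 1))) atTop (nhds L) := by
  set M : ℕ → (ℕ → S) → ℝ := fun n ω => ∑ t ∈ range n, α t * H (ω t) (ω (t + 1)) with hM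
  have hMs : ∀ n ω, M (n + 1) ω = M n ω + α n * H (ω n) (ω (n + 1)) := fun n ω => by
    simp only [hM, Finset.sum_range_succ]
  have hdep : ∀ n, DependsOn (M n) (Set.Iic n) := by
    intro n ω ω' h
    refine Finset.sum_congr rfl fun t ht => ?_
    have := Finset.mem_range.1 ht
    rw [h t (Set.mem_Iic.2 (by omega)), h (t + 1) (Set.mem_Iic.2 (by omega))]
  have hdepH : ∀ n, DependsOn (fun ω : ℕ → S => H (ω n) (ω (n + 1))) (Set.Iic (n + 1)) := by
    intro n ω ω' h
    simp only
    rw [h n (Set.mem_Iic.2 (by omega)), h (n + 1) (Set.mem_Iic.2 le_rfl)]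
  have hdep' : ∀ n, DependsOn (M n) (Set.Iic (n + 1)) := fun n ω ω' h =>
    hdep n fun i hi => h i (Set.mem_Iic.2 ((Set.mem_Iic.1 hi).trans (Nat.le_succ n)))
  have hmart : Martingale M (Filtration.piLE (X := fun _ : ℕ => S)) μ := by
    refine martingale_of_setIntegral_eq_succ
      (fun n => (hdep n).measurable_piLE.stronglyMeasurable)
      (fun n => (hdep n).integrable_path μ) fun n s hs => ?_
    have hs' : MeasurableSet s := Filtration.piLE.le n s hs
    have hind : DependsOn (s.indicator (fun _ => (1 : ℝ))) (Set.Iic n) :=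
      Measurable.dependsOn_of_piLE (measurable_const.indicator hs)
    have h0 := integral_mul_centred_eq_zero hnonneg hιnonneg μ hμ hH hind
    have h1 : ∫ ω in s, H (ω n) (ω (n + 1)) ∂μ = 0 := by
      rw [← h0, ← integral_indicator hs']
      congr 1; funext ω
      by_cases h : ω ∈ s <;> simp [h]
    simp_rw [hMs]
    rw [integral_add ((hdep n).integrable_path μ).integrableOn
      (((hdepH n).integrable_path μ).const_mul _).integrableOn, integral_const_mul, h1]
    simp
  set B : ℝ := ∑ i, ∑ j, H i j ^ 2 with hB
  have hHB : ∀ i j, H i j ^ 2 ≤ B := fun i j =>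
    (Finset.single_le_sum (f := fun j => H i j ^ 2) (fun _ _ => sq_nonneg _)
      (Finset.mem_univ j)).trans
    (Finset.single_le_sum (f := fun i => ∑ j, H i j ^ 2)
      (fun _ _ => Finset.sum_nonneg fun _ _ => sq_nonneg _) (Finset.mem_univ i))
  have hB0 : 0 ≤ B := Finset.sum_nonneg fun _ _ => Finset.sum_nonneg fun _ _ => sq_nonneg _
  -- orthogonality of increments removes the cross term in `M (n + 1) ^ 2`
  have hL2 : ∀ n, ∫ ω, M n ω ^ 2 ∂μ ≤ B * ∑ t ∈ range n, α t ^ 2 := by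
    intro n
    induction n with
    | zero => simp [hM]
    | succ n ih =>
      have e : ∀ ω, M (n + 1) ω ^ 2 = M n ω ^ 2 + 2 * α n * (M n ω * H (ω n) (ω (n + 1)))
          + α n ^ 2 * H (ω n) (ω (n + 1)) ^ 2 := fun ω => by rw [hMs]; ring
      have i1 : Integrable (fun ω => M n ω ^ 2) μ :=
        DependsOn.integrable_path (n := n) (fun ω ω' h => by simp only [hdep n h]) μ
      have i2 : Integrable (fun ω => M n ω * H (ω n) (ω (n + 1))) μ :=
        DependsOn.integrable_path (n := n + 1) (fun ω ω' h => by
          have := hdepH n h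
          simp only at this ⊢
          rw [this, hdep' n h]) μ
      have i3 : Integrable (fun ω : ℕ → S => H (ω n) (ω (n + 1)) ^ 2) μ :=
        DependsOn.integrable_path (n := n + 1) (fun ω ω' h => by
          have := hdepH n h
          simp only at this ⊢
          rw [this]) μ
      have i12 : Integrable (fun ω => M n ω ^ 2 + 2 * α n * (M n ω * H (ω n) (ω (n + 1)))) μ :=
        i1.add (i2.const_mul _)
      simp_rw [e]
      rw [integral_add i12 (i3.const_mul _),
        integral_add i1 (i2.const_mul _), integral_const_mul, integral_const_mul,
        integral_mul_centred_eq_zero hnonneg hιnonneg μ hμ hH (hdep n), Finset.sum_range_succ]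
      have h3 : ∫ ω, H (ω n) (ω (n + 1)) ^ 2 ∂μ ≤ B := by
        calc _ ≤ ∫ _, B ∂μ := integral_mono i3 (integrable_const _) fun ω => hHB _ _
          _ = B := by simp
      nlinarith [mul_le_mul_of_nonneg_left h3 (sq_nonneg (α n))]
  refine hmart.submartingale.exists_ae_tendsto_of_bdd
    (R := (1 + B * ∑' t, α t ^ 2).toNNReal) fun n => ?_
  have hi : Integrable (M n) μ := (hdep n).integrable_path μ
  have i1 : Integrable (fun ω => M n ω ^ 2) μ :=
    DependsOn.integrable_path (n := n) (fun ω ω' h => by simp only [hdep n h]) μ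
  rw [eLpNorm_one_eq_lintegral_enorm, ← ofReal_integral_norm_eq_lintegral_enorm hi]
  refine ENNReal.ofReal_le_ofReal ?_
  calc ∫ ω, ‖M n ω‖ ∂μ ≤ ∫ ω, (1 + M n ω ^ 2) ∂μ := by
        refine integral_mono hi.norm ((integrable_const _).add i1) fun ω => ?_
        simp only [Real.norm_eq_abs]
        nlinarith [sq_abs (M n ω), sq_nonneg (|M n ω| - 1), abs_nonneg (M n ω)]
    _ = 1 + ∫ ω, M n ω ^ 2 ∂μ := by rw [integral_add (integrable_const _) i1]; simp
    _ ≤ 1 + B * ∑' t, α t ^ 2 := by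
        gcongr
        exact (hL2 n).trans (mul_le_mul_of_nonneg_left
          (hα2.sum_le_tsum _ fun _ _ => sq_nonneg _) hB0)

/-! ### Poisson equation and centred sums -/

theorem stochastic_pow {S : Type*} [Fintype S] [DecidableEq S] {P : Matrix S S ℝ}
    (hnonneg : ∀ i j, 0 ≤ P i j) (hrowsum : ∀ i, ∑ j, P i j = 1) (n : ℕ) :
    (∀ i j, 0 ≤ (P ^ n) i j) ∧ ∀ i, ∑ j, (P ^ n) i j = 1 := by
  induction n with
  | zero =>
    refine ⟨fun i j => ?_, fun i => ?_⟩
    · simp only [pow_zero, Matrix.one_apply]; split_ifs <;> norm_num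
    · simp [Matrix.one_apply]
  | succ n ih =>
    refine ⟨fun i j => ?_, fun i => ?_⟩
    · rw [pow_succ, Matrix.mul_apply]
      exact Finset.sum_nonneg fun k _ => mul_nonneg (ih.1 _ _) (hnonneg _ _)
    · simp_rw [pow_succ, Matrix.mul_apply]
      rw [Finset.sum_comm]
      simp_rw [← Finset.mul_sum, hrowsum, mul_one]
      exact ih.2 i

/-- Maximum principle: harmonic functions of an irreducible chain are constant. -/
theorem harmonic_const {S : Type*} [Fintype S] [Nonempty S] [DecidableEq S] {P : Matrix S S ℝ}
    (hnonneg : ∀ i j, 0 ≤ P i j) (hrowsum : ∀ i, ∑ j, P i j = 1)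
    (hirr : ∀ i j, ∃ n : ℕ, 0 < (P ^ n) i j) {g : S → ℝ} (hg : P *ᵥ g = g) :
    ∃ a, ∀ i, g i = a := by
  obtain ⟨i, hi⟩ := Finite.exists_max g
  refine ⟨g i, fun j => ?_⟩
  obtain ⟨n, hn⟩ := hirr i j
  obtain ⟨hn0, hn1⟩ := stochastic_pow hnonneg hrowsum n
  have hgn : ∀ m, (P ^ m) *ᵥ g = g := by
    intro m
    induction m with
    | zero => simp
    | succ m ih => rw [pow_succ, ← Matrix.mulVec_mulVec, hg, ih]
  have h0 : ∑ k, (P ^ n) i k * (g i - g k) = 0 := by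
    have h1 : ∑ k, (P ^ n) i k * g k = g i := congrFun (hgn n) i
    simp_rw [mul_sub]
    rw [Finset.sum_sub_distrib, ← Finset.sum_mul, hn1, h1]; ring
  have h2 := (Finset.sum_eq_zero_iff_of_nonneg fun k _ =>
    mul_nonneg (hn0 i k) (sub_nonneg.2 (hi k))).1 h0 j (Finset.mem_univ j)
  rcases mul_eq_zero.1 h2 with h | h
  · exact absurd h hn.ne'
  · linarith

/-- Solvability of the Poisson equation `(1 - P) g = f - d(f)`. The operator
`g ↦ (1 - P) g + d(g)` is injective by the maximum principle, hence surjective, and a preimage `g` of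
`f` satisfies `d(g) = d(f)`. -/
theorem exists_poisson {S : Type*} [Fintype S] [Nonempty S] [DecidableEq S] {P : Matrix S S ℝ}
    (hnonneg : ∀ i j, 0 ≤ P i j) (hrowsum : ∀ i, ∑ j, P i j = 1)
    (hirr : ∀ i j, ∃ n : ℕ, 0 < (P ^ n) i j)
    {d : S → ℝ} (hdsum : ∑ s, d s = 1) (hdstat : ∀ j, ∑ i, d i * P i j = d j) (f : S → ℝ) :
    ∃ g : S → ℝ, ∀ i, f i - ∑ s, d s * f s = g i - ∑ j, P i j * g j := by
  have hdP : ∀ g : S → ℝ, ∑ i, d i * ∑ j, P i j * g j = ∑ j, d j * g j := by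
    intro g
    simp_rw [Finset.mul_sum]
    rw [Finset.sum_comm]
    refine Finset.sum_congr rfl fun j _ => ?_
    rw [← hdstat j, Finset.sum_mul]
    exact Finset.sum_congr rfl fun i _ => by ring
  let T : (S → ℝ) →ₗ[ℝ] (S → ℝ) :=
    { toFun := fun g i => g i - ∑ j, P i j * g j + ∑ s, d s * g s
      map_add' := fun g h => by
        funext i
        simp only [Pi.add_apply, mul_add, Finset.sum_add_distrib]; ring
      map_smul' := fun a g => by
        funext i
        simp only [Pi.smul_apply, smul_eq_mul, RingHom.id_apply, mul_add, mul_sub, Finset.mul_sum,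
          mul_left_comm a] }
  have hT : ∀ g i, T g i = g i - ∑ j, P i j * g j + ∑ s, d s * g s := fun g i => rfl
  have hdT : ∀ g, ∑ i, d i * T g i = ∑ s, d s * g s := by
    intro g
    simp_rw [hT, mul_add, mul_sub]
    rw [Finset.sum_add_distrib, Finset.sum_sub_distrib, hdP, ← Finset.sum_mul, hdsum]; ring
  have hinj : Function.Injective T := by
    rw [← LinearMap.ker_eq_bot, LinearMap.ker_eq_bot']
    intro g hg
    have h0 : ∑ s, d s * g s = 0 := by rw [← hdT g, hg]; simp
    have h1 : P *ᵥ g = g := by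
      funext i
      have := congrFun hg i
      rw [hT, h0, Pi.zero_apply] at this
      change ∑ j, P i j * g j = g i
      linarith
    obtain ⟨a, ha⟩ := harmonic_const hnonneg hrowsum hirr h1
    simp_rw [ha, ← Finset.sum_mul, hdsum, one_mul] at h0
    funext i; rw [ha, h0]; rfl
  obtain ⟨g, hg⟩ := LinearMap.injective_iff_surjective.1 hinj f
  refine ⟨g, fun i => ?_⟩
  rw [← hg, hdT, hT]; ring

theorem stationary_pos {S : Type*} [Fintype S] [DecidableEq S] {P : Matrix S S ℝ}
    (hnonneg : ∀ i j, 0 ≤ P i j) (hrowsum : ∀ i, ∑ j, P i j = 1)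
    (hirr : ∀ i j, ∃ n : ℕ, 0 < (P ^ n) i j)
    {d : S → ℝ} (hdnonneg : ∀ s, 0 ≤ d s) (hdsum : ∑ s, d s = 1)
    (hdstat : ∀ j, ∑ i, d i * P i j = d j) (j : S) : 0 < d j := by
  obtain ⟨i, hi⟩ : ∃ i, 0 < d i := by
    by_contra! h
    have : ∑ s, d s ≤ 0 := Finset.sum_nonpos fun s _ => h s
    linarith
  obtain ⟨n, hn⟩ := hirr i j
  have hd : ∀ m, d ᵥ* (P ^ m) = d := by
    intro m
    induction m with
    | zero => simp
    | succ m ih =>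
      rw [pow_succ, ← Matrix.vecMul_vecMul, ih]
      funext k; exact hdstat k
  have h1 : ∑ k, d k * (P ^ n) k j = d j := congrFun (hd n) j
  rw [← h1]
  exact Finset.sum_pos' (fun k _ => mul_nonneg (hdnonneg k)
    ((stochastic_pow hnonneg hrowsum n).1 k j)) ⟨i, Finset.mem_univ i, mul_pos hi hn⟩

/-- Summation by parts: a bounded telescoping sum weighted by decreasing weights tending to zero
converges. -/
theorem exists_tendsto_abel {α g : ℕ → ℝ} (hα0 : ∀ t, 0 ≤ α t) (hαanti : Antitone α)
    (hαlim : Tendsto α atTop (nhds 0)) {C : ℝ} (hg : ∀ t, |g t| ≤ C) :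
    ∃ L, Tendsto (fun n => ∑ t ∈ range n, α t * (g t - g (t + 1))) atTop (nhds L) := by
  have hid : ∀ n, ∑ t ∈ range n, α t * (g t - g (t + 1))
      = α 0 * g 0 - α n * g n - ∑ t ∈ range n, (α t - α (t + 1)) * g (t + 1) := by
    intro n
    induction n with
    | zero => simp
    | succ n ih => rw [Finset.sum_range_succ, Finset.sum_range_succ, ih]; ring
  have hs : Summable fun t => α t - α (t + 1) := by
    refine summable_of_sum_range_le (c := α 0)
      (fun t => sub_nonneg.2 (hαanti (Nat.le_succ t))) fun n => ?_
    rw [Finset.sum_range_sub']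
    linarith [hα0 n]
  have hs' : Summable fun t => (α t - α (t + 1)) * g (t + 1) := by
    refine Summable.of_norm_bounded (hs.mul_right C) fun t => ?_
    rw [norm_mul, Real.norm_of_nonneg (sub_nonneg.2 (hαanti (Nat.le_succ t)))]
    exact mul_le_mul_of_nonneg_left (hg _) (sub_nonneg.2 (hαanti (Nat.le_succ t)))
  have hb : Tendsto (fun n => α n * g n) atTop (nhds 0) := by
    refine squeeze_zero_norm (a := fun n => α n * C) (fun n => ?_) (by simpa using hαlim.mul_const C)
    rw [norm_mul, Real.norm_of_nonneg (hα0 n)]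
    exact mul_le_mul_of_nonneg_left (hg n) (hα0 n)
  simp_rw [hid]
  exact ⟨_, (hb.const_sub (α 0 * g 0)).sub hs'.hasSum.tendsto_sum_nat⟩

/-- The weighted fluctuations of any function `F` of the transitions around its stationary mean `m`
are almost surely summable in the conditional sense. -/
theorem ae_exists_tendsto_centred_sum
    {S : Type*} [Fintype S] [Nonempty S] [DecidableEq S]
    [MeasurableSpace S] [MeasurableSingletonClass S]
    {P : Matrix S S ℝ} (hnonneg : ∀ i j, 0 ≤ P i j) (hrowsum : ∀ i, ∑ j, P i j = 1)
    (hirr : ∀ i j, ∃ n : ℕ, 0 < (P ^ n) i j)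
    {d : S → ℝ} (hdsum : ∑ s, d s = 1) (hdstat : ∀ j, ∑ i, d i * P i j = d j)
    {ι : S → ℝ} (hιnonneg : ∀ s, 0 ≤ ι s)
    (μ : Measure (ℕ → S)) [IsProbabilityMeasure μ]
    (hμ : ∀ (n : ℕ) (ys : ℕ → S),
      μ {ω | ∀ i ≤ n, ω i = ys i} =
        ENNReal.ofReal (ι (ys 0) * ∏ i ∈ Finset.range n, P (ys i) (ys (i + 1))))
    {α : ℕ → ℝ} (hα0 : ∀ t, 0 ≤ α t) (hαanti : Antitone α)
    (hαlim : Tendsto α atTop (nhds 0)) (hα2 : Summable fun t => α t ^ 2)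
    (F : S → S → ℝ) {m : ℝ} (hm : ∑ i, d i * ∑ j, P i j * F i j = m) :
    ∀ᵐ ω ∂μ, ∃ L, Tendsto (fun n => ∑ t ∈ range n, α t * (F (ω t) (ω (t + 1)) - m))
      atTop (nhds L) := by
  obtain ⟨g, hg⟩ := exists_poisson hnonneg hrowsum hirr hdsum hdstat
    (fun i => ∑ j, P i j * F i j)
  let H : S → S → ℝ := fun i j =>
    F i j - (∑ j, P i j * F i j) + (g j - ∑ j, P i j * g j)
  have hH : ∀ i, ∑ j, P i j * H i j = 0 := by
    intro i
    simp only [H, mul_add, mul_sub, Finset.sum_add_distrib, Finset.sum_sub_distrib]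
    rw [← Finset.sum_mul, ← Finset.sum_mul, hrowsum]; ring
  have hdec : ∀ i j, F i j - m = H i j + (g i - g j) := by
    intro i j
    have := hg i
    simp only [hm] at this
    simp only [H]; linarith
  filter_upwards [ae_exists_tendsto_martingale hnonneg hιnonneg μ hμ hH hα2] with ω hω
  obtain ⟨L, hL⟩ := hω
  obtain ⟨L', hL'⟩ := exists_tendsto_abel (g := fun t => g (ω t)) (C := ∑ s, |g s|) hα0 hαanti hαlim
    fun t => Finset.single_le_sum (f := fun s => |g s|) (fun _ _ => abs_nonneg _)
      (Finset.mem_univ (ω t))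
  refine ⟨L + L', (hL.add hL').congr fun n => ?_⟩
  rw [← Finset.sum_add_distrib]
  exact Finset.sum_congr rfl fun t _ => by rw [hdec]; ring

/-! ### Negative definiteness of the TD matrix -/

/-- Compactness of the unit sphere upgrades pointwise negativity to a uniform bound. -/
theorem exists_coercive {E : Type*} [NormedAddCommGroup E] [InnerProductSpace ℝ E]
    [FiniteDimensional ℝ E] (A : E →L[ℝ] E) (hA : ∀ u, u ≠ 0 → inner ℝ u (A u) < 0) :
    ∃ c > 0, ∀ u, inner ℝ u (A u) ≤ -c * ‖u‖ ^ 2 := by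
  have hscale : ∀ u : E, u ≠ 0 → ‖u‖⁻¹ • u ∈ Metric.sphere (0 : E) 1 := fun u hu => by
    simp [norm_smul, hu]
  rcases (Metric.sphere (0 : E) 1).eq_empty_or_nonempty with he | hne
  · refine ⟨1, one_pos, fun u => ?_⟩
    have hu : u = 0 := by
      by_contra hu
      have := hscale u hu
      rw [he] at this
      exact this
    simp [hu]
  · obtain ⟨v, hv, hmax⟩ := (isCompact_sphere (0 : E) 1).exists_isMaxOn hne
      (f := fun u => inner ℝ u (A u)) (by fun_prop)
    have hv0 : v ≠ 0 := fun h => by simp [h] at hv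
    refine ⟨-inner ℝ v (A v), neg_pos.2 (hA v hv0), fun u => ?_⟩
    by_cases hu : u = 0
    · simp [hu]
    have h1 : inner ℝ (‖u‖⁻¹ • u) (A (‖u‖⁻¹ • u)) ≤ inner ℝ v (A v) := hmax (hscale u hu)
    rw [map_smul, real_inner_smul_left, real_inner_smul_right] at h1
    have hp : 0 < ‖u‖ := norm_pos_iff.2 hu
    have h2 : inner ℝ u (A u) = (‖u‖⁻¹ * (‖u‖⁻¹ * inner ℝ u (A u))) * ‖u‖ ^ 2 := by
      field_simp
    rw [h2, neg_neg]
    exact mul_le_mul_of_nonneg_right h1 (sq_nonneg _)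

/-- `⟨v, D (γ P - 1) v⟩ ≤ -(1 - γ) ⟨v, D v⟩` for a stationary weight `D`, from
`v i * v j ≤ (v i ^ 2 + v j ^ 2) / 2`. -/
theorem quadratic_form_le {S : Type*} [Fintype S] {P : Matrix S S ℝ}
    (hnonneg : ∀ i j, 0 ≤ P i j) (hrowsum : ∀ i, ∑ j, P i j = 1)
    {d : S → ℝ} (hdnonneg : ∀ s, 0 ≤ d s) (hdstat : ∀ j, ∑ i, d i * P i j = d j)
    {γ : ℝ} (hγ0 : 0 ≤ γ) (v : S → ℝ) :
    ∑ i, d i * (v i * (γ * ∑ j, P i j * v j - v i)) ≤ -((1 - γ) * ∑ i, d i * v i ^ 2) := by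
  have h1 : ∑ i, ∑ j, d i * P i j * (v i * v j) ≤ ∑ i, d i * v i ^ 2 := by
    calc ∑ i, ∑ j, d i * P i j * (v i * v j)
        ≤ ∑ i, ∑ j, (d i * P i j * (v i ^ 2 / 2) + d i * P i j * (v j ^ 2 / 2)) := by
          refine Finset.sum_le_sum fun i _ => Finset.sum_le_sum fun j _ => ?_
          rw [← mul_add]
          exact mul_le_mul_of_nonneg_left (by nlinarith [sq_nonneg (v i - v j)])
            (mul_nonneg (hdnonneg i) (hnonneg i j))
      _ = ∑ i, d i * (v i ^ 2 / 2) + ∑ j, d j * (v j ^ 2 / 2) := by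
          simp_rw [Finset.sum_add_distrib]
          congr 1
          · refine Finset.sum_congr rfl fun i _ => ?_
            rw [← Finset.sum_mul, ← Finset.mul_sum, hrowsum, mul_one]
          · rw [Finset.sum_comm]
            refine Finset.sum_congr rfl fun j _ => ?_
            rw [← Finset.sum_mul, hdstat]
      _ = ∑ i, d i * v i ^ 2 := by
          rw [← Finset.sum_add_distrib]; exact Finset.sum_congr rfl fun i _ => by ring
  have h2 : ∑ i, d i * (v i * (γ * ∑ j, P i j * v j - v i))
      = γ * ∑ i, ∑ j, d i * P i j * (v i * v j) - ∑ i, d i * v i ^ 2 := by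
    rw [Finset.mul_sum, ← Finset.sum_sub_distrib]
    refine Finset.sum_congr rfl fun i _ => ?_
    have : ∑ j, d i * P i j * (v i * v j) = d i * v i * ∑ j, P i j * v j := by
      rw [Finset.mul_sum]; exact Finset.sum_congr rfl fun j _ => by ring
    rw [this]; ring
  rw [h2]
  nlinarith [mul_le_mul_of_nonneg_left h1 hγ0]

/-- The TD matrix is the stationary mean of the random update matrices. -/
theorem td_matrix_apply {S : Type*} [Fintype S] [DecidableEq S] {K : ℕ} (P : Matrix S S ℝ)
    (hrowsum : ∀ i, ∑ j, P i j = 1) (d : S → ℝ) (feat : S → Fin K → ℝ) (γ : ℝ) (k l : Fin K) :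
    ((Matrix.of feat)ᵀ * Matrix.diagonal d * (γ • P - 1) * Matrix.of feat :
        Matrix (Fin K) (Fin K) ℝ) k l
      = ∑ i, d i * ∑ j, P i j * (feat i k * (γ * feat j l - feat i l)) := by
  rw [Matrix.mul_assoc, Matrix.mul_apply]
  refine Finset.sum_congr rfl fun i _ => ?_
  rw [Matrix.mul_diagonal, Matrix.sub_mul, Matrix.sub_apply, Matrix.one_mul, Matrix.smul_mul,
    Matrix.smul_apply, Matrix.mul_apply]
  simp only [Matrix.transpose_apply, Matrix.of_apply, smul_eq_mul]
  have : ∑ j, P i j * (feat i k * (γ * feat j l - feat i l))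
      = feat i k * (γ * ∑ j, P i j * feat j l) - feat i k * feat i l * ∑ j, P i j := by
    simp_rw [Finset.mul_sum]
    rw [← Finset.sum_sub_distrib]
    exact Finset.sum_congr rfl fun j _ => by ring
  rw [this, hrowsum]; ring

theorem td_matrix_neg_def {S : Type*} [Fintype S] [DecidableEq S] {K : ℕ} {P : Matrix S S ℝ}
    (hnonneg : ∀ i j, 0 ≤ P i j) (hrowsum : ∀ i, ∑ j, P i j = 1)
    {d : S → ℝ} (hdpos : ∀ s, 0 < d s) (hdstat : ∀ j, ∑ i, d i * P i j = d j)
    {X : Matrix S (Fin K) ℝ} (hX : Function.Injective X.mulVec)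
    {γ : ℝ} (hγ0 : 0 ≤ γ) (hγ1 : γ < 1) {u : Fin K → ℝ} (hu : u ≠ 0) :
    u ⬝ᵥ (Xᵀ * Matrix.diagonal d * (γ • P - 1) * X) *ᵥ u < 0 := by
  set v := X *ᵥ u with hv
  have hv0 : v ≠ 0 := fun h => hu (hX (by rw [← hv, h, Matrix.mulVec_zero]))
  have e : u ⬝ᵥ (Xᵀ * Matrix.diagonal d * (γ • P - 1) * X) *ᵥ u
      = ∑ i, d i * (v i * (γ * ∑ j, P i j * v j - v i)) := by
    rw [← Matrix.mulVec_mulVec, ← Matrix.mulVec_mulVec, ← Matrix.mulVec_mulVec,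
      Matrix.dotProduct_mulVec, Matrix.vecMul_transpose, ← hv]
    refine Finset.sum_congr rfl fun i _ => ?_
    rw [Matrix.mulVec_diagonal, Matrix.sub_mulVec, Matrix.one_mulVec, Matrix.smul_mulVec]
    simp only [Pi.sub_apply, Pi.smul_apply, smul_eq_mul, Matrix.mulVec, dotProduct]
    ring
  obtain ⟨s, hs⟩ := Function.ne_iff.1 hv0
  have hpos : 0 < ∑ i, d i * v i ^ 2 :=
    Finset.sum_pos' (fun i _ => mul_nonneg (hdpos i).le (sq_nonneg _))
      ⟨s, Finset.mem_univ s, mul_pos (hdpos s) (sq_pos_of_ne_zero hs)⟩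
  rw [e]
  have := quadratic_form_le hnonneg hrowsum (fun s => (hdpos s).le) hdstat hγ0 v
  nlinarith [mul_pos (sub_pos.2 hγ1) hpos]

/-! ### Step sizes and conclusion -/

theorem stepSize_facts {ν : ℝ} (hν : ν ∈ Set.Ioo (2 / 3 : ℝ) 1) {α : ℕ → ℝ}
    (hα : α = fun t : ℕ => 1 / ((t : ℝ) + 2) ^ ν) :
    (∀ t, 0 ≤ α t) ∧ Antitone α ∧ Tendsto α atTop (nhds 0) ∧ (Summable fun t => α t ^ 2) ∧
      Tendsto (fun n => ∑ t ∈ range n, α t) atTop atTop := by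
  obtain ⟨h1, h2⟩ := hν
  have hν0 : 0 < ν := by linarith
  have hα0 : ∀ t, 0 ≤ α t := fun t => by rw [hα]; positivity
  have hshift : α = fun t : ℕ => 1 / ((t + 2 : ℕ) : ℝ) ^ ν := by rw [hα]; push_cast; rfl
  refine ⟨hα0, ?_, ?_, ?_, ?_⟩
  · intro s t hst
    rw [hα]
    have : (s : ℝ) ≤ t := by exact_mod_cast hst
    exact one_div_le_one_div_of_le (by positivity)
      (Real.rpow_le_rpow (by positivity) (by linarith) hν0.le)
  · have h : Tendsto (fun n : ℕ => 1 / (n : ℝ) ^ ν) atTop (nhds 0) := by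
      refine (((tendsto_rpow_atTop hν0).comp
        tendsto_natCast_atTop_atTop).inv_tendsto_atTop).congr fun n => ?_
      simp
    rw [hshift]
    exact h.comp (tendsto_add_atTop_nat 2)
  · have h : Summable fun n : ℕ => 1 / (n : ℝ) ^ (ν * 2) :=
      Real.summable_one_div_nat_rpow.2 (by linarith)
    refine ((summable_nat_add_iff 2).2 h).congr fun t => ?_
    rw [hshift]
    simp only
    rw [div_pow, one_pow, Real.rpow_mul (by positivity)]
    norm_cast
  · rw [← not_summable_iff_tendsto_nat_atTop_of_nonneg hα0, hshift]
    intro h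
    have := Real.summable_one_div_nat_rpow.1
      ((summable_nat_add_iff (f := fun n : ℕ => 1 / (n : ℝ) ^ ν) 2).1 h)
    linarith

/-- Almost sure convergence of linear TD with Markovian samples: on the trajectory
probability space (given by the Ionescu–Tulcea theorem, characterized here via its
cylinder probabilities), the linear TD iterates with step sizes `α_t = 1/(t+2)^ν`,
`ν ∈ (2/3, 1)`, converge almost surely to the TD fixed point `w* = −A⁻¹ b`. -/
theorem ae_tendsto_of_linearTD_markov
    {S : Type*} [Fintype S] [Nonempty S] [DecidableEq S]
    [MeasurableSpace S] [MeasurableSingletonClass S] {K : ℕ}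
    -- the transition matrix: row stochastic, irreducible, aperiodic
    (P : Matrix S S ℝ)
    (hnonneg : ∀ i j, 0 ≤ P i j)
    (hrowsum : ∀ i, ∑ j, P i j = 1)
    (hirr : ∀ i j, ∃ n : ℕ, 0 < (P ^ n) i j)
    (haper : ∀ i, ∀ e : ℕ, (∀ n ∈ returnTimes P i, e ∣ n) → e = 1)
    -- the stationary distribution
    (d : S → ℝ) (hdnonneg : ∀ s, 0 ≤ d s) (hdsum : ∑ s, d s = 1)
    (hdstat : ∀ j, ∑ i, d i * P i j = d j)
    -- features with full column rank, rewards, discount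
    (feat : S → Fin K → ℝ)
    (X : Matrix S (Fin K) ℝ) (hXfeat : X = Matrix.of feat)
    (hX : Function.Injective X.mulVec)
    (r : S → ℝ)
    (γ : ℝ) (hγ0 : 0 ≤ γ) (hγ1 : γ < 1)
    -- step sizes
    (ν : ℝ) (hν : ν ∈ Set.Ioo (2 / 3 : ℝ) 1)
    (α : ℕ → ℝ) (hα : α = fun t : ℕ => 1 / ((t : ℝ) + 2) ^ ν)
    -- the trajectory measure produced by the Ionescu–Tulcea theorem, characterized
    -- by its cylinder probabilities
    (ι : S → ℝ) (hιnonneg : ∀ s, 0 ≤ ι s) (hιsum : ∑ s, ι s = 1)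
    (μ : Measure (ℕ → S)) [IsProbabilityMeasure μ]
    (hμ : ∀ (n : ℕ) (ys : ℕ → S),
      μ {ω | ∀ i ≤ n, ω i = ys i} =
        ENNReal.ofReal (ι (ys 0) * ∏ i ∈ Finset.range n, P (ys i) (ys (i + 1))))
    -- the linear TD iterates
    (w₀ : Fin K → ℝ) (w : ℕ → (ℕ → S) → (Fin K → ℝ))
    (hw0 : ∀ ω, w 0 ω = w₀)
    (hwstep : ∀ t ω, w (t + 1) ω = w t ω +
      (α t * (r (ω t) + γ * (∑ k, feat (ω (t + 1)) k * w t ω k)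
        - ∑ k, feat (ω t) k * w t ω k)) • feat (ω t))
    -- the TD fixed point
    (A : Matrix (Fin K) (Fin K) ℝ)
    (hA : A = Xᵀ * Matrix.diagonal d * (γ • P - 1) * X)
    (b : Fin K → ℝ) (hb : b = (Xᵀ * Matrix.diagonal d).mulVec r)
    (wstar : Fin K → ℝ) (hwstar : wstar = -(A⁻¹.mulVec b)) :
    ∀ᵐ ω ∂μ, Tendsto (fun t => w t ω) atTop (nhds wstar) := by
  obtain ⟨hα0, hαanti, hαlim, hα2, hαsum⟩ := stepSize_facts hν hα
  have hdpos := stationary_pos hnonneg hrowsum hirr hdnonneg hdsum hdstat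
  have hneg : ∀ u : Fin K → ℝ, u ≠ 0 → u ⬝ᵥ A *ᵥ u < 0 := fun u hu => by
    rw [hA]; exact td_matrix_neg_def hnonneg hrowsum hdpos hdstat hX hγ0 hγ1 hu
  have hAunit : IsUnit A.det := by
    rw [← Matrix.isUnit_iff_isUnit_det, ← Matrix.mulVec_injective_iff_isUnit]
    intro u v huv
    by_contra hne
    have h := hneg (u - v) (sub_ne_zero.2 hne)
    rw [Matrix.mulVec_sub, huv, sub_self, dotProduct_zero] at h
    exact lt_irrefl _ h
  have hAw : A *ᵥ wstar = -b := by
    rw [hwstar, Matrix.mulVec_neg, Matrix.mulVec_mulVec, Matrix.mul_nonsing_inv _ hAunit,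
      Matrix.one_mulVec]
  -- the random update matrix and the noise at the fixed point, as functions of a transition `(i, j)`;
  -- the error `w - wstar` is multiplied by `1 + α Am` and shifted by `α cv`
  let Am : S → S → Matrix (Fin K) (Fin K) ℝ := fun i j =>
    Matrix.of fun k l => feat i k * (γ * feat j l - feat i l)
  let cv : S → S → Fin K → ℝ := fun i j => r i • feat i + Am i j *ᵥ wstar
  have hAmean : ∀ k l, ∑ i, d i * ∑ j, P i j * Am i j k l = A k l := fun k l => by
    rw [hA, hXfeat, td_matrix_apply P hrowsum d feat γ k l]; rfl
  have hcmean : ∀ k, ∑ i, d i * ∑ j, P i j * cv i j k = 0 := by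
    intro k
    have h1 : ∑ i, d i * ∑ j, P i j * (r i * feat i k) = b k := by
      rw [hb, hXfeat]
      simp only [Matrix.mulVec, dotProduct, Matrix.mul_diagonal, Matrix.transpose_apply,
        Matrix.of_apply]
      refine Finset.sum_congr rfl fun i _ => ?_
      rw [← Finset.sum_mul, hrowsum]; ring
    have h2 : ∑ i, d i * ∑ j, P i j * (Am i j *ᵥ wstar) k = (A *ᵥ wstar) k := by
      simp only [Matrix.mulVec, dotProduct]
      simp_rw [← hAmean, Finset.mul_sum, Finset.sum_mul]
      conv_lhs => enter [2, i]; rw [Finset.sum_comm]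
      rw [Finset.sum_comm]
      refine Finset.sum_congr rfl fun l _ => Finset.sum_congr rfl fun i _ => ?_
      exact Finset.sum_congr rfl fun j _ => by ring
    have h3 : ∀ i j, cv i j k = r i * feat i k + (Am i j *ᵥ wstar) k := fun i j => rfl
    simp_rw [h3, mul_add, Finset.sum_add_distrib, mul_add, Finset.sum_add_distrib]
    rw [h1, h2, hAw]; simp
  have hconv : ∀ (F : S → S → ℝ) (m : ℝ), ∑ i, d i * ∑ j, P i j * F i j = m → ∀ᵐ ω ∂μ, ∃ L,
      Tendsto (fun n => ∑ t ∈ range n, α t * (F (ω t) (ω (t + 1)) - m)) atTop (nhds L) :=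
    fun F m hm => ae_exists_tendsto_centred_sum hnonneg hrowsum hirr hdsum hdstat hιnonneg μ hμ
      hα0 hαanti hαlim hα2 F hm
  have hA_ae : ∀ᵐ ω ∂μ, ∀ k l, ∃ L, Tendsto
      (fun n => ∑ t ∈ range n, α t * (Am (ω t) (ω (t + 1)) k l - A k l)) atTop (nhds L) :=
    ae_all_iff.2 fun k => ae_all_iff.2 fun l => hconv (fun i j => Am i j k l) _ (hAmean k l)
  have hc_ae : ∀ᵐ ω ∂μ, ∀ k, ∃ L, Tendsto
      (fun n => ∑ t ∈ range n, α t * (cv (ω t) (ω (t + 1)) k - 0)) atTop (nhds L) :=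
    ae_all_iff.2 fun k => hconv (fun i j => cv i j k) _ (hcmean k)
  -- the Euclidean norm is needed for the contraction estimate, so the recursion is moved from
  -- `Fin K → ℝ` to `EuclideanSpace ℝ (Fin K)`
  let T : Matrix (Fin K) (Fin K) ℝ →ₗ[ℝ]
      (EuclideanSpace ℝ (Fin K) →L[ℝ] EuclideanSpace ℝ (Fin K)) :=
    (Matrix.toEuclideanCLM (𝕜 := ℝ) (n := Fin K)).toAlgEquiv.toLinearMap
  have hT : ∀ B v, T B (WithLp.toLp 2 v) = WithLp.toLp 2 (B *ᵥ v) :=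
    fun B v => Matrix.toEuclideanCLM_toLp B v
  have hTc : Continuous T := T.continuous_of_finiteDimensional
  obtain ⟨c, hc, hcoer⟩ := exists_coercive (T A) fun u hu => by
    have h : inner ℝ u (T A u) = u.ofLp ⬝ᵥ A *ᵥ u.ofLp := by
      rw [EuclideanSpace.inner_eq_star_dotProduct, dotProduct_comm]
      simp [show (T A u).ofLp = A *ᵥ u.ofLp from Matrix.ofLp_toEuclideanCLM A u]
    rw [h]
    exact hneg _ fun h0 => hu (by ext k; simp [h0])
  filter_upwards [hA_ae, hc_ae] with ω hω1 hω2
  choose L hL using hω1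
  choose N hN using hω2
  have hM : Tendsto (fun n => ∑ t ∈ range n, α t • (T (Am (ω t) (ω (t + 1))) - T A)) atTop
      (nhds (T (Matrix.of L))) := by
    have h : Tendsto (fun n => ∑ t ∈ range n, α t • (Am (ω t) (ω (t + 1)) - A)) atTop
        (nhds (Matrix.of L)) := by
      refine tendsto_pi_nhds.2 fun k => tendsto_pi_nhds.2 fun l => ?_
      refine (hL k l).congr fun n => ?_
      rw [Matrix.sum_apply]
      rfl
    refine ((hTc.tendsto _).comp h).congr fun n => ?_
    simp only [Function.comp_apply, map_sum, map_smul, map_sub]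
  have hN' : Tendsto (fun n => ∑ t ∈ range n,
      α t • (WithLp.toLp 2 (cv (ω t) (ω (t + 1))) : EuclideanSpace ℝ (Fin K))) atTop
      (nhds (WithLp.toLp 2 N)) := by
    have h : Tendsto (fun n => ∑ t ∈ range n, α t • cv (ω t) (ω (t + 1))) atTop (nhds N) := by
      refine tendsto_pi_nhds.2 fun k => (hN k).congr fun n => ?_
      simp [Finset.sum_apply]
    refine (((PiLp.continuous_toLp 2 _).tendsto _).comp h).congr fun n => ?_
    simp only [Function.comp_apply, WithLp.toLp_sum, WithLp.toLp_smul]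
  set B : ℝ := ∑ i, ∑ j, (‖T (Am i j)‖ + ‖(WithLp.toLp 2 (cv i j) : EuclideanSpace ℝ (Fin K))‖)
    with hB
  have hBle : ∀ i j,
      ‖T (Am i j)‖ + ‖(WithLp.toLp 2 (cv i j) : EuclideanSpace ℝ (Fin K))‖ ≤ B := fun i j =>
    (Finset.single_le_sum
      (f := fun j => ‖T (Am i j)‖ + ‖(WithLp.toLp 2 (cv i j) : EuclideanSpace ℝ (Fin K))‖)
      (fun _ _ => by positivity) (Finset.mem_univ j)).trans
    (Finset.single_le_sum (f := fun i => ∑ j,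
      (‖T (Am i j)‖ + ‖(WithLp.toLp 2 (cv i j) : EuclideanSpace ℝ (Fin K))‖))
      (fun _ _ => Finset.sum_nonneg fun _ _ => by positivity) (Finset.mem_univ i))
  have hz := tendsto_zero_of_linear_recursion (T A) hc hcoer hα0 hαlim hαsum
    (fun t => T (Am (ω t) (ω (t + 1)))) (fun t => WithLp.toLp 2 (cv (ω t) (ω (t + 1))))
    (B := B) (fun t => (le_add_of_nonneg_right (norm_nonneg _)).trans (hBle _ _))
    (fun t => (le_add_of_nonneg_left (norm_nonneg _)).trans (hBle _ _)) _ hM _ hN'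
    (fun t => WithLp.toLp 2 (w t ω - wstar)) fun t => by
      rw [hT, ← WithLp.toLp_add, ← WithLp.toLp_smul, ← WithLp.toLp_add]
      congr 1
      funext k
      have h1 : ∀ v, (Am (ω t) (ω (t + 1)) *ᵥ v) k = feat (ω t) k *
          (γ * ∑ l, feat (ω (t + 1)) l * v l - ∑ l, feat (ω t) l * v l) := by
        intro v
        simp only [Am, Matrix.mulVec, dotProduct, Matrix.of_apply]
        rw [Finset.mul_sum, ← Finset.sum_sub_distrib, Finset.mul_sum]
        exact Finset.sum_congr rfl fun l _ => by ring
      rw [hwstep]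
      simp only [cv, Matrix.mulVec_sub, Pi.add_apply, Pi.sub_apply, Pi.smul_apply, smul_eq_mul, h1]
      ring
  have hz' := ((PiLp.continuous_ofLp 2 (fun _ : Fin K => ℝ)).tendsto _).comp hz
  have : Tendsto (fun t => (w t ω - wstar) + wstar) atTop (nhds (0 + wstar)) :=
    Tendsto.add_const wstar (by simpa [Function.comp_def] using hz')
  simpa using this
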